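/- Let a signed digraph be structurally unbalanced and contain a directed spanning tree. Then N − 1 = rank(L_s) < rank(L_{e_s}) = N holds if and only if the digraph contains an SB-rooted SCC. -/

import Mathlib

open Matrix

/-- The signed incidence matrix of a signed digraph. -/
def Es {N M : ℕ} (head tail : Fin M → Fin N) (σ : Fin M → ℝ) : Matrix (Fin N) (Fin M) ℝ :=
  Matrix.of fun i k => if i = head k then 1 else if i = tail k then -σ k else 0

/-- The signed in-incidence matrix of a signed digraph. -/
def Ein {N M : ℕ} (head tail : Fin M → Fin N) (σ : Fin M → ℝ) : Matrix (Fin N) (Fin M) ℝ :=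
  Matrix.of fun i k => if i = tail k then -σ k else 0

/-- The signed Laplacian `L_s = E_{s⊙} E_sᵀ`. -/
def Ls {N M : ℕ} (head tail : Fin M → Fin N) (σ : Fin M → ℝ) : Matrix (Fin N) (Fin N) ℝ :=
  Ein head tail σ * (Es head tail σ)ᵀ

/-- The signed edge Laplacian `L_{e_s} = E_sᵀ E_{s⊙}`. -/
def Les {N M : ℕ} (head tail : Fin M → Fin N) (σ : Fin M → ℝ) : Matrix (Fin M) (Fin M) ℝ :=
  (Es head tail σ)ᵀ * Ein head tail σ

/-- Node `b` is reachable from node `a`. -/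
def Reaches {N M : ℕ} (head tail : Fin M → Fin N) : Fin N → Fin N → Prop :=
  Relation.ReflTransGen fun a b => ∃ k, head k = a ∧ tail k = b

/-- The digraph contains a directed spanning tree. -/
def HasSpanningTree {N M : ℕ} (head tail : Fin M → Fin N) : Prop :=
  ∃ r, ∀ b, Reaches head tail r b

/-- A root node: a node that is the tail of no edge. -/
def IsRootNode {N M : ℕ} (tail : Fin M → Fin N) (i : Fin N) : Prop :=
  ∀ k, tail k ≠ i

/-- Structural balance of a signed digraph. -/
def StructBalanced {N M : ℕ} (head tail : Fin M → Fin N) (σ : Fin M → ℝ) : Prop :=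
  ∃ d : Fin N → ℝ, (∀ i, d i = 1 ∨ d i = -1) ∧ ∀ k, d (head k) * d (tail k) = σ k

/-- A rooted strongly connected component. -/
def IsRootedSCC {N M : ℕ} (head tail : Fin M → Fin N) (S : Finset (Fin N)) : Prop :=
  2 ≤ S.card ∧ (∀ k, tail k ∈ S → head k ∈ S) ∧
    ∀ a ∈ S, ∀ b ∈ S, Reaches head tail a b

/-- Structural balance of a rooted SCC. -/
def SCCBalanced {N M : ℕ} (head tail : Fin M → Fin N) (σ : Fin M → ℝ)
    (S : Finset (Fin N)) : Prop :=
  ∃ d : Fin N → ℝ, (∀ i ∈ S, d i = 1 ∨ d i = -1) ∧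
    ∀ k, head k ∈ S → tail k ∈ S → d (head k) * d (tail k) = σ k

/-!
At a node `i` the Laplacian reads `(L_s x)_i = ∑ (x_i - σ_k x_{head k})`, the sum running over the
edges `k` with tail `i`. Hence a kernel vector `x` obeys a maximum principle: where `|x|` is maximal
every summand vanishes, so `|x|` is maximal at the heads of the incoming edges as well. Going
backwards along paths, `|x|` is maximal at the root `r` of a spanning tree. So `x` is determined by
`x_r`, whence `rank L_s ≥ N - 1`, and if `x ≠ 0` its signs balance the set of nodes reaching `r`.
Conversely, a rooted SCC `S` makes `L_s` block triangular, and a balancing sign vector of `S` lies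
in the kernel of the diagonal block of `S`.

For an unbalanced digraph with a spanning tree `E_sᵀ` is injective, so `rank L_{e_s}` equals
`rank E_{s⊙}`, which is `N` exactly when every node has an incoming edge, i.e. when the set of nodes
reaching `r` is not just `{r}`.
-/

section LinearAlgebra

variable {m n o K : Type*} [Fintype n] [Field K]

theorem rank_eq_card_iff_forall_mulVec_eq_zero (A : Matrix m n K) :
    A.rank = Fintype.card n ↔ ∀ x, A *ᵥ x = 0 → x = 0 := by
  rw [rank_eq_finrank_span_cols, eq_comm, ← Set.finrank,
    ← linearIndependent_iff_card_eq_finrank_span, ← mulVec_injective_iff]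
  exact injective_iff_map_eq_zero A.mulVecLin

theorem rank_mul_eq_right_of_forall_mulVec_eq_zero [Fintype o] {A : Matrix m n K}
    (hA : ∀ x, A *ᵥ x = 0 → x = 0) (B : Matrix n o K) : (A * B).rank = B.rank := by
  rw [rank, mulVecLin_mul, LinearMap.range_comp]
  exact (Submodule.equivMapOfInjective A.mulVecLin
    ((injective_iff_map_eq_zero A.mulVecLin).mpr hA) _).finrank_eq.symm

theorem card_le_rank_add_one_of_forall_apply_eq_zero {A : Matrix m n K} (i : n)
    (hA : ∀ x, A *ᵥ x = 0 → x i = 0 → x = 0) : Fintype.card n ≤ A.rank + 1 := by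
  let evalKer : LinearMap.ker A.mulVecLin →ₗ[K] K :=
    LinearMap.proj i ∘ₗ (LinearMap.ker A.mulVecLin).subtype
  have evalKer_injective : Function.Injective evalKer :=
    (injective_iff_map_eq_zero evalKer).mpr fun x hx => Subtype.ext (hA x x.2 hx)
  have finrank_ker_le : Module.finrank K (LinearMap.ker A.mulVecLin) ≤ 1 := by
    simpa using LinearMap.finrank_le_finrank_of_injective evalKer_injective
  have rank_add_finrank_ker := A.mulVecLin.finrank_range_add_finrank_ker
  rw [Module.finrank_fintype_fun_eq_card] at rank_add_finrank_ker
  rw [rank]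
  lia

theorem exists_mulVec_eq_zero_of_block_triangular {A : Matrix n n K} {p : n → Prop}
    (hA : ∀ i, p i → ∀ j, ¬p j → A i j = 0) {x : n → K} (hx : ∀ i, p i → (A *ᵥ x) i = 0)
    {i : n} (hi : p i) (hxi : x i ≠ 0) :
    ∃ y ≠ 0, A *ᵥ y = 0 := by
  classical
  rw [exists_mulVec_eq_zero_iff, twoBlockTriangular_det' A p hA, mul_eq_zero,
    ← exists_mulVec_eq_zero_iff]
  refine .inl ⟨fun j => x j, fun h => hxi (congrFun h ⟨i, hi⟩), funext fun ⟨j, hj⟩ => ?_⟩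
  have sum_not_p : ∑ l : {l // ¬p l}, A j l * x l = 0 :=
    Finset.sum_eq_zero fun l _ => by rw [hA j hj l l.2, zero_mul]
  have sum_all := Fintype.sum_subtype_add_sum_subtype p fun l => A j l * x l
  rw [sum_not_p, add_zero] at sum_all
  exact sum_all.trans (hx j hj)

end LinearAlgebra

section SignedDigraph

variable {N M : ℕ} {head tail : Fin M → Fin N} {σ : Fin M → ℝ}

theorem Reaches.of_forall_edge {P : Fin N → Prop} (hP : ∀ k, P (tail k) → P (head k))
    {a b : Fin N} (hab : Reaches head tail a b) (hb : P b) : P a := by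
  induction hab using Relation.ReflTransGen.head_induction_on with
  | refl => exact hb
  | head hedge _ ih =>
    obtain ⟨k, rfl, rfl⟩ := hedge
    exact hP k ih

theorem IsRootNode.eq_of_reaches {a b : Fin N} (hb : IsRootNode tail b)
    (hab : Reaches head tail a b) : a = b := by
  rcases hab.cases_tail with h | ⟨_, _, k, _, hk⟩
  · exact h.symm
  · exact absurd hk (hb k)

theorem IsRootedSCC.nonempty {S : Finset (Fin N)} (hS : IsRootedSCC head tail S) : S.Nonempty :=
  Finset.card_pos.mp (two_pos.trans_le hS.1)

theorem IsRootedSCC.not_isRootNode {S : Finset (Fin N)} (hS : IsRootedSCC head tail S)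
    {b : Fin N} (hb : b ∈ S) : ¬IsRootNode tail b := by
  obtain ⟨two_le_card, _, hreach⟩ := hS
  obtain ⟨a, ha, hab⟩ := Finset.exists_mem_ne two_le_card b
  exact fun hroot => hab (hroot.eq_of_reaches (hreach a ha b hb))

theorem IsRootedSCC.forall_not_isRootNode {S : Finset (Fin N)} (hS : IsRootedSCC head tail S)
    (htree : HasSpanningTree head tail) (i : Fin N) : ¬IsRootNode tail i := by
  obtain ⟨r, hr⟩ := htree
  obtain ⟨a, ha⟩ := hS.nonempty
  have hrS : r ∈ S := (hr a).of_forall_edge hS.2.1 ha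
  intro hroot
  obtain rfl := hroot.eq_of_reaches (hr i)
  exact hS.not_isRootNode hrS hroot

open Classical in
/-- The nodes from which `r` is reachable. If `r` is the root of a spanning tree, this is the strong
component of `r`, and the only candidate for a rooted SCC. -/
noncomputable def ancestors (head tail : Fin M → Fin N) (r : Fin N) : Finset (Fin N) :=
  {a | Reaches head tail a r}

theorem mem_ancestors {r a : Fin N} : a ∈ ancestors head tail r ↔ Reaches head tail a r := by
  simp [ancestors]

theorem isRootedSCC_ancestors (hht : ∀ k, head k ≠ tail k) {r : Fin N}
    (hr : ∀ b, Reaches head tail r b) (hroot : ¬IsRootNode tail r) :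
    IsRootedSCC head tail (ancestors head tail r) := by
  simp only [IsRootedSCC, mem_ancestors]
  refine ⟨?_, fun k hk => .head ⟨k, rfl, rfl⟩ hk, fun a ha b _ => ha.trans (hr b)⟩
  obtain ⟨k, rfl⟩ : ∃ k, tail k = r := by simpa [IsRootNode] using hroot
  exact Finset.one_lt_card.mpr ⟨head k, mem_ancestors.mpr (.single ⟨k, rfl, rfl⟩), tail k,
    mem_ancestors.mpr .refl, hht k⟩

theorem Es_transpose_mulVec_apply (hht : ∀ k, head k ≠ tail k) (x : Fin N → ℝ) (k : Fin M) :
    ((Es head tail σ)ᵀ *ᵥ x) k = x (head k) - σ k * x (tail k) := by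
  have entry (i : Fin N) : Es head tail σ i k =
      Pi.single (M := fun _ => ℝ) (head k) 1 i - Pi.single (M := fun _ => ℝ) (tail k) (σ k) i := by
    have := hht k
    simp only [Es, of_apply, Pi.single_apply]
    grind
  simp [mulVec, dotProduct, entry, sub_mul, Finset.sum_sub_distrib, Pi.single_apply]

theorem Ein_transpose_mulVec_apply (x : Fin N → ℝ) (k : Fin M) :
    ((Ein head tail σ)ᵀ *ᵥ x) k = -σ k * x (tail k) := by
  simp [Ein, mulVec, dotProduct]

theorem Ls_mulVec_apply (hht : ∀ k, head k ≠ tail k) (hσ : ∀ k, σ k = 1 ∨ σ k = -1)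
    (x : Fin N → ℝ) (i : Fin N) :
    (Ls head tail σ *ᵥ x) i = ∑ k with tail k = i, (x i - σ k * x (head k)) := by
  rw [Ls, ← mulVec_mulVec, mulVec, dotProduct, Finset.sum_filter]
  refine Fintype.sum_congr _ _ fun k => ?_
  rw [Es_transpose_mulVec_apply hht, Ein, of_apply]
  rcases hσ k with h | h <;> grind

theorem rank_Ein_eq_iff (hσ : ∀ k, σ k = 1 ∨ σ k = -1) :
    (Ein head tail σ).rank = N ↔ ∀ i, ¬IsRootNode tail i := by
  have rank_eq_iff := rank_eq_card_iff_forall_mulVec_eq_zero (Ein head tail σ)ᵀ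
  rw [rank_transpose, Fintype.card_fin] at rank_eq_iff
  rw [rank_eq_iff]
  constructor
  · intro hker i hroot
    have single_eq_zero : Pi.single i (1 : ℝ) = 0 := hker _ <| funext fun k => by
      simp [Ein_transpose_mulVec_apply, hroot k]
    simp at single_eq_zero
  · intro hroot x hx
    ext i
    obtain ⟨k, rfl⟩ : ∃ k, tail k = i := by simpa [IsRootNode] using hroot i
    have hk := congrFun hx k
    rw [Ein_transpose_mulVec_apply] at hk
    rcases hσ k with h | h <;> simpa [h] using hk

theorem sccBalanced_univ_iff :
    SCCBalanced head tail σ Finset.univ ↔ StructBalanced head tail σ := by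
  simp [SCCBalanced, StructBalanced]

theorem abs_eq_abs_of_eq_sign_mul {a b s : ℝ} (hs : s = 1 ∨ s = -1) (h : a = s * b) :
    |a| = |b| := by
  rcases hs with rfl | rfl <;> simp [h]

theorem sccBalanced_of_abs_eq {S : Finset (Fin N)} {x : Fin N → ℝ} {c : ℝ} (hc : 0 < c)
    (habs : ∀ i ∈ S, |x i| = c)
    (hedge : ∀ k, head k ∈ S → tail k ∈ S → x (head k) = σ k * x (tail k)) :
    SCCBalanced head tail σ S := by
  refine ⟨fun i => x i / c, fun i hi => ?_, fun k hh ht => ?_⟩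
  · rw [← abs_eq zero_le_one, abs_div, habs i hi, abs_of_pos hc, div_self hc.ne']
  · have tail_mul_self : x (tail k) * x (tail k) = c * c := by
      rw [← abs_mul_abs_self, habs _ ht]
    have c_ne_zero : c ≠ 0 := hc.ne'
    beta_reduce
    rw [hedge k hh ht, div_mul_div_comm, mul_assoc, tail_mul_self]
    field_simp

theorem eq_zero_of_Es_transpose_mulVec_eq_zero (hht : ∀ k, head k ≠ tail k)
    (hσ : ∀ k, σ k = 1 ∨ σ k = -1) (hSUB : ¬StructBalanced head tail σ)
    (htree : HasSpanningTree head tail) (x : Fin N → ℝ) (hx : (Es head tail σ)ᵀ *ᵥ x = 0) :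
    x = 0 := by
  obtain ⟨r, hr⟩ := htree
  have hedge (k : Fin M) : x (head k) = σ k * x (tail k) := by
    rw [← sub_eq_zero, ← Es_transpose_mulVec_apply hht, hx, Pi.zero_apply]
  have abs_root (i : Fin N) : |x r| = |x i| :=
    (hr i).of_forall_edge (P := fun a => |x a| = |x i|)
      (fun k hk => (abs_eq_abs_of_eq_sign_mul (hσ k) (hedge k)).trans hk) rfl
  by_contra hx0
  obtain ⟨i, hi⟩ := Function.ne_iff.mp hx0
  exact hSUB <| sccBalanced_univ_iff.mp <| sccBalanced_of_abs_eq (abs_pos.mpr hi)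
    (fun j _ => (abs_root j).symm.trans (abs_root i)) fun k _ _ => hedge k

theorem rank_Les_eq_rank_Ein (hht : ∀ k, head k ≠ tail k) (hσ : ∀ k, σ k = 1 ∨ σ k = -1)
    (hSUB : ¬StructBalanced head tail σ) (htree : HasSpanningTree head tail) :
    (Les head tail σ).rank = (Ein head tail σ).rank :=
  rank_mul_eq_right_of_forall_mulVec_eq_zero
    (eq_zero_of_Es_transpose_mulVec_eq_zero hht hσ hSUB htree) _

/-- Multiplying `(L_s x)_i = 0` by `x_i` turns it into a vanishing sum of nonnegative terms. -/
theorem eq_sign_mul_of_Ls_mulVec_eq_zero_of_abs_le (hht : ∀ k, head k ≠ tail k)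
    (hσ : ∀ k, σ k = 1 ∨ σ k = -1) {x : Fin N → ℝ} {k : Fin M}
    (hx : (Ls head tail σ *ᵥ x) (tail k) = 0) (hmax : ∀ j, |x j| ≤ |x (tail k)|) :
    x (head k) = σ k * x (tail k) := by
  set i := tail k
  have term_nonneg (l : Fin M) : 0 ≤ x i * (x i - σ l * x (head l)) := by
    have abs_eq : |σ l * x (head l)| = |x (head l)| := abs_eq_abs_of_eq_sign_mul (hσ l) rfl
    have product_le : x i * (σ l * x (head l)) ≤ x i * x i :=
      calc x i * (σ l * x (head l)) ≤ |x i| * |σ l * x (head l)| :=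
            (le_abs_self _).trans (abs_mul _ _).le
        _ ≤ |x i| * |x i| := by rw [abs_eq]; gcongr ?_ * ?_; exact hmax _
        _ = x i * x i := abs_mul_abs_self _
    linarith
  have sum_eq_zero : ∑ l with tail l = i, x i * (x i - σ l * x (head l)) = 0 := by
    rw [← Finset.mul_sum, ← Ls_mulVec_apply hht hσ, hx, mul_zero]
  have term_eq_zero : x i * (x i - σ k * x (head k)) = 0 :=
    (Finset.sum_eq_zero_iff_of_nonneg fun l _ => term_nonneg l).mp sum_eq_zero k (by simp [i])
  rcases mul_eq_zero.mp term_eq_zero with hi | hk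
  · have head_eq_zero : x (head k) = 0 := by simpa [hi] using hmax (head k)
    rw [head_eq_zero, hi, mul_zero]
  · rcases hσ k with h | h <;> rw [h] at hk ⊢ <;> linarith

theorem Reaches.forall_abs_le_of_Ls_mulVec_eq_zero (hht : ∀ k, head k ≠ tail k)
    (hσ : ∀ k, σ k = 1 ∨ σ k = -1) {x : Fin N → ℝ} (hx : Ls head tail σ *ᵥ x = 0)
    {a b : Fin N} (hab : Reaches head tail a b) (hb : ∀ j, |x j| ≤ |x b|) :
    ∀ j, |x j| ≤ |x a| :=
  hab.of_forall_edge (P := fun a => ∀ j, |x j| ≤ |x a|) (fun k hk j => (hk j).trans_eq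
    (abs_eq_abs_of_eq_sign_mul (hσ k) <|
      eq_sign_mul_of_Ls_mulVec_eq_zero_of_abs_le hht hσ (congrFun hx _) hk).symm) hb

theorem abs_le_abs_root_of_Ls_mulVec_eq_zero (hht : ∀ k, head k ≠ tail k)
    (hσ : ∀ k, σ k = 1 ∨ σ k = -1) {r : Fin N} (hr : ∀ b, Reaches head tail r b)
    {x : Fin N → ℝ} (hx : Ls head tail σ *ᵥ x = 0) (j : Fin N) : |x j| ≤ |x r| := by
  have : Nonempty (Fin N) := ⟨r⟩
  obtain ⟨i, hi⟩ := Finite.exists_max fun j => |x j|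
  exact (hr i).forall_abs_le_of_Ls_mulVec_eq_zero hht hσ hx hi j

theorem eq_zero_of_Ls_mulVec_eq_zero_of_root_eq_zero (hht : ∀ k, head k ≠ tail k)
    (hσ : ∀ k, σ k = 1 ∨ σ k = -1) {r : Fin N} (hr : ∀ b, Reaches head tail r b)
    {x : Fin N → ℝ} (hx : Ls head tail σ *ᵥ x = 0) (hxr : x r = 0) : x = 0 := by
  ext j
  simpa [hxr] using abs_le_abs_root_of_Ls_mulVec_eq_zero hht hσ hr hx j

theorem le_rank_Ls_add_one (hht : ∀ k, head k ≠ tail k) (hσ : ∀ k, σ k = 1 ∨ σ k = -1)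
    (htree : HasSpanningTree head tail) : N ≤ (Ls head tail σ).rank + 1 := by
  obtain ⟨r, hr⟩ := htree
  simpa using card_le_rank_add_one_of_forall_apply_eq_zero r
    fun _ => eq_zero_of_Ls_mulVec_eq_zero_of_root_eq_zero hht hσ hr

theorem sccBalanced_ancestors_of_Ls_mulVec_eq_zero (hht : ∀ k, head k ≠ tail k)
    (hσ : ∀ k, σ k = 1 ∨ σ k = -1) {r : Fin N} (hr : ∀ b, Reaches head tail r b)
    {x : Fin N → ℝ} (hx0 : x ≠ 0) (hx : Ls head tail σ *ᵥ x = 0) :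
    SCCBalanced head tail σ (ancestors head tail r) := by
  have hmax_root := abs_le_abs_root_of_Ls_mulVec_eq_zero hht hσ hr hx
  have hmax {a : Fin N} (ha : a ∈ ancestors head tail r) : ∀ j, |x j| ≤ |x a| :=
    (mem_ancestors.mp ha).forall_abs_le_of_Ls_mulVec_eq_zero hht hσ hx hmax_root
  have root_ne_zero : x r ≠ 0 :=
    mt (eq_zero_of_Ls_mulVec_eq_zero_of_root_eq_zero hht hσ hr hx) hx0
  exact sccBalanced_of_abs_eq (abs_pos.mpr root_ne_zero)
    (fun a ha => (hmax_root a).antisymm (hmax ha r))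
    fun k _ ht => eq_sign_mul_of_Ls_mulVec_eq_zero_of_abs_le hht hσ (congrFun hx _) (hmax ht)

theorem Ls_apply_eq_zero_of_mem_of_notMem {S : Finset (Fin N)}
    (hS : ∀ k, tail k ∈ S → head k ∈ S) {i j : Fin N} (hi : i ∈ S) (hj : j ∉ S) :
    Ls head tail σ i j = 0 := by
  rw [Ls, mul_apply]
  refine Finset.sum_eq_zero fun k _ => ?_
  simp only [Ein, Es, of_apply, transpose_apply]
  grind

theorem Ls_mulVec_apply_eq_zero_of_balanced (hht : ∀ k, head k ≠ tail k)
    (hσ : ∀ k, σ k = 1 ∨ σ k = -1) {S : Finset (Fin N)} (hS : ∀ k, tail k ∈ S → head k ∈ S)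
    {d : Fin N → ℝ} (hd : ∀ i ∈ S, d i = 1 ∨ d i = -1)
    (hedge : ∀ k, head k ∈ S → tail k ∈ S → d (head k) * d (tail k) = σ k)
    {i : Fin N} (hi : i ∈ S) : (Ls head tail σ *ᵥ d) i = 0 := by
  rw [Ls_mulVec_apply hht hσ]
  refine Finset.sum_eq_zero fun k hk => ?_
  obtain rfl : tail k = i := (Finset.mem_filter.mp hk).2
  have hh : head k ∈ S := hS k hi
  rw [← hedge k hh hi]
  rcases hd _ hh with h | h <;> rw [h] <;> ring

theorem SCCBalanced.exists_Ls_mulVec_eq_zero (hht : ∀ k, head k ≠ tail k)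
    (hσ : ∀ k, σ k = 1 ∨ σ k = -1) {S : Finset (Fin N)} (hbal : SCCBalanced head tail σ S)
    (hne : S.Nonempty) (hS : ∀ k, tail k ∈ S → head k ∈ S) : ∃ x ≠ 0, Ls head tail σ *ᵥ x = 0 := by
  obtain ⟨d, hd, hedge⟩ := hbal
  obtain ⟨i, hi⟩ := hne
  have hdi : d i ≠ 0 := by rcases hd i hi with h | h <;> simp [h]
  exact exists_mulVec_eq_zero_of_block_triangular (p := (· ∈ S))
    (fun _ hi _ hj => Ls_apply_eq_zero_of_mem_of_notMem hS hi hj)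
    (fun _ => Ls_mulVec_apply_eq_zero_of_balanced hht hσ hS hd hedge) hi hdi

theorem exists_balanced_isRootedSCC_iff (hht : ∀ k, head k ≠ tail k)
    (hσ : ∀ k, σ k = 1 ∨ σ k = -1) (htree : HasSpanningTree head tail) :
    (∃ S, IsRootedSCC head tail S ∧ SCCBalanced head tail σ S) ↔
      (∀ i, ¬IsRootNode tail i) ∧ ∃ x ≠ 0, Ls head tail σ *ᵥ x = 0 := by
  constructor
  · rintro ⟨S, hS, hbal⟩
    exact ⟨hS.forall_not_isRootNode htree,
      hbal.exists_Ls_mulVec_eq_zero hht hσ hS.nonempty hS.2.1⟩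
  · rintro ⟨hroot, x, hx0, hx⟩
    obtain ⟨r, hr⟩ := htree
    exact ⟨ancestors head tail r, isRootedSCC_ancestors hht hr (hroot r),
      sccBalanced_ancestors_of_Ls_mulVec_eq_zero hht hσ hr hx0 hx⟩

end SignedDigraph

theorem rank_gap_iff_SB_rooted_SCC_general {N M : ℕ}
    (head tail : Fin M → Fin N) (σ : Fin M → ℝ)
    (hht : ∀ k, head k ≠ tail k)
    (hσ : ∀ k, σ k = 1 ∨ σ k = -1)
    (hSUB : ¬ StructBalanced head tail σ)
    (htree : HasSpanningTree head tail) :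
    ((Ls head tail σ).rank = N - 1 ∧
     (Ls head tail σ).rank < (Les head tail σ).rank ∧
     (Les head tail σ).rank = N) ↔
    ∃ S, IsRootedSCC head tail S ∧ SCCBalanced head tail σ S := by
  have hLes : (Les head tail σ).rank = N ↔ ∀ i, ¬IsRootNode tail i := by
    rw [rank_Les_eq_rank_Ein hht hσ hSUB htree, rank_Ein_eq_iff hσ]
  have hLs : (Ls head tail σ).rank ≠ N ↔ ∃ x ≠ 0, Ls head tail σ *ᵥ x = 0 := by
    have rank_eq_iff := rank_eq_card_iff_forall_mulVec_eq_zero (Ls head tail σ)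
    rw [Fintype.card_fin] at rank_eq_iff
    rw [Ne, rank_eq_iff]
    push Not
    simp only [and_comm]
  rw [exists_balanced_isRootedSCC_iff hht hσ htree, ← hLes, ← hLs]
  have rank_Ls_ge : N ≤ (Ls head tail σ).rank + 1 := le_rank_Ls_add_one hht hσ htree
  have rank_Ls_le : (Ls head tail σ).rank ≤ N := rank_le_width _
  lia

theorem rank_gap_iff_SB_rooted_SCC {N M : ℕ}
    (head tail : Fin M → Fin N) (σ : Fin M → ℝ)
    (hht : ∀ k, head k ≠ tail k)
    (hinj : ∀ k k', head k = head k' → tail k = tail k' → k = k')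
    (hσ : ∀ k, σ k = 1 ∨ σ k = -1)
    (hdss : ∀ k k', head k = tail k' → tail k = head k' → σ k = σ k')
    (hSUB : ¬ StructBalanced head tail σ)
    (htree : HasSpanningTree head tail) :
    ((Ls head tail σ).rank = N - 1 ∧
     (Ls head tail σ).rank < (Les head tail σ).rank ∧
     (Les head tail σ).rank = N) ↔
    ∃ S, IsRootedSCC head tail S ∧ SCCBalanced head tail σ S := by
  exact rank_gap_iff_SB_rooted_SCC_general head tail σ hht hσ hSUB htree
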